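/- arXiv:0708.3938 — 2 statements merged into one kernel-verified Lean document; each statement's English description precedes it below -/
import Mathlib

section
/- Let X = [0,1]³ be the unit cube in ℝ³, a¹ = (1, 1, 0) and a² = (1, −1, 0). Then R_c(X) is proximinal in C(X). -/
open Matrix Set Filter Topology

/-- `p 0, p 1, ..., p (m-1)` is a (finite) path whose first difference is
perpendicular to `a1`, with differences alternately perpendicular to `a1` and `a2`,
and all differences nonzero. -/
def IsPathFrom {n : ℕ} (a1 a2 : Fin n → ℝ) (m : ℕ) (p : ℕ → Fin n → ℝ) : Prop :=
  ∀ i, i + 1 < m →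
    p (i + 1) - p i ≠ 0 ∧
    (i % 2 = 0 → a1 ⬝ᵥ (p (i + 1) - p i) = 0) ∧
    (i % 2 = 1 → a2 ⬝ᵥ (p (i + 1) - p i) = 0)

/-- A finite path with respect to the directions `a1` and `a2` (the alternation may
start with either direction). -/
def IsPath {n : ℕ} (a1 a2 : Fin n → ℝ) (m : ℕ) (p : ℕ → Fin n → ℝ) : Prop :=
  IsPathFrom a1 a2 m p ∨ IsPathFrom a2 a1 m p

/-- A finite path of length `m` (i.e. with `m` points) all of whose points lie in `X`. -/
def IsPathIn {n : ℕ} (a1 a2 : Fin n → ℝ) (X : Set (Fin n → ℝ)) (m : ℕ)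
    (p : ℕ → Fin n → ℝ) : Prop :=
  1 ≤ m ∧ IsPath a1 a2 m p ∧ ∀ i < m, p i ∈ X

/-- An irreducible path in `X`: no strictly shorter path in `X` joins its endpoints. -/
def IsIrreduciblePathIn {n : ℕ} (a1 a2 : Fin n → ℝ) (X : Set (Fin n → ℝ)) (m : ℕ)
    (p : ℕ → Fin n → ℝ) : Prop :=
  IsPathIn a1 a2 X m p ∧
  ¬ ∃ l q, l < m ∧ IsPathIn a1 a2 X l q ∧ q 0 = p 0 ∧ q (l - 1) = p (m - 1)

/-- An infinite path whose first difference is perpendicular to `a1`. -/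
def IsInfPathFrom {n : ℕ} (a1 a2 : Fin n → ℝ) (p : ℕ → Fin n → ℝ) : Prop :=
  ∀ i,
    p (i + 1) - p i ≠ 0 ∧
    (i % 2 = 0 → a1 ⬝ᵥ (p (i + 1) - p i) = 0) ∧
    (i % 2 = 1 → a2 ⬝ᵥ (p (i + 1) - p i) = 0)

/-- An infinite path with respect to the directions `a1` and `a2`. -/
def IsInfPath {n : ℕ} (a1 a2 : Fin n → ℝ) (p : ℕ → Fin n → ℝ) : Prop :=
  IsInfPathFrom a1 a2 p ∨ IsInfPathFrom a2 a1 p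

/-- `f` is bounded on `X`. -/
def BddOn {n : ℕ} (f : (Fin n → ℝ) → ℝ) (X : Set (Fin n → ℝ)) : Prop :=
  ∃ M, ∀ x ∈ X, |f x| ≤ M

/-- `R_a(X)`: sums of two ridge functions with directions `a1, a2` that are bounded on `X`
(the individual summands need not be bounded). -/
def RaSet {n : ℕ} (a1 a2 : Fin n → ℝ) (X : Set (Fin n → ℝ)) : Set ((Fin n → ℝ) → ℝ) :=
  {f | (∃ g1 g2 : ℝ → ℝ, ∀ x ∈ X, f x = g1 (a1 ⬝ᵥ x) + g2 (a2 ⬝ᵥ x)) ∧ BddOn f X}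

/-- `R_b(X)`: sums of two ridge functions with directions `a1, a2` whose summands are
bounded on `X`. -/
def RbSet {n : ℕ} (a1 a2 : Fin n → ℝ) (X : Set (Fin n → ℝ)) : Set ((Fin n → ℝ) → ℝ) :=
  {f | ∃ g1 g2 : ℝ → ℝ, (∀ x ∈ X, f x = g1 (a1 ⬝ᵥ x) + g2 (a2 ⬝ᵥ x)) ∧
    BddOn (fun x => g1 (a1 ⬝ᵥ x)) X ∧ BddOn (fun x => g2 (a2 ⬝ᵥ x)) X}

/-- `R_c(X)`: sums of two ridge functions with directions `a1, a2` whose summands are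
continuous on `X`. -/
def RcSet {n : ℕ} (a1 a2 : Fin n → ℝ) (X : Set (Fin n → ℝ)) : Set ((Fin n → ℝ) → ℝ) :=
  {f | ∃ g1 g2 : ℝ → ℝ, (∀ x ∈ X, f x = g1 (a1 ⬝ᵥ x) + g2 (a2 ⬝ᵥ x)) ∧
    ContinuousOn (fun x => g1 (a1 ⬝ᵥ x)) X ∧ ContinuousOn (fun x => g2 (a2 ⬝ᵥ x)) X}

/-- The uniform (sup) distance of `f` and `g` over `X`. -/
noncomputable def supDist {n : ℕ} (X : Set (Fin n → ℝ)) (f g : (Fin n → ℝ) → ℝ) : ℝ :=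
  sSup {r | ∃ x ∈ X, r = |f x - g x|}

/-- `f` has an extremal element (best approximation in the sup norm over `X`) in `S`. -/
def HasExtremalIn {n : ℕ} (X : Set (Fin n → ℝ)) (f : (Fin n → ℝ) → ℝ)
    (S : Set ((Fin n → ℝ) → ℝ)) : Prop :=
  ∃ g0 ∈ S, supDist X f g0 = sInf ((supDist X f) '' S)

/-- The orbit of `t`: all points of `X` joined to `t` by a common path lying in `X`. -/
def Orbit {n : ℕ} (a1 a2 : Fin n → ℝ) (X : Set (Fin n → ℝ)) (t : Fin n → ℝ) :
    Set (Fin n → ℝ) :=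
  {y | ∃ m p, IsPathIn a1 a2 X m p ∧ (∃ i < m, p i = t) ∧ (∃ j < m, p j = y)}

/-- The variation of `f` on a set `Y`. -/
noncomputable def varOn {n : ℕ} (f : (Fin n → ℝ) → ℝ) (Y : Set (Fin n → ℝ)) : ℝ :=
  sSup {r | ∃ x ∈ Y, ∃ y ∈ Y, r = |f x - f y|}

/-!
Call `g` a *potential* with error `E` if `g (v y) - g (v x) ≤ f y - f x + 2 * E` whenever
`u x = u y`. Every approximation `k ∘ u + g ∘ v` of `f` with error `E` makes `g` a potential, and
conversely a potential is completed to such an approximation by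
`k s = sup {f x - g (v x) | u x = s} - E`.

By Tychonoff's theorem potentials with errors `E + 1 / (n + 1)` give a potential with error `E`,
possibly discontinuous. Replacing its values by the largest lower bounds which the constraints
impose on them keeps it a potential, and makes it continuous as soon as a pair of points on a common
fibre of `u` can follow small changes of its `v`-coordinates. For the cube, in the coordinates
`s = x₀ + x₁`, `t = x₀ - x₁` on the diamond `|s - 1| + |t| ≤ 1`, it suffices to move `s - 1`
into a slightly different symmetric interval.
-/

section FiberSup

variable {Z T : Type*} {π : Z → T} {φ : Z → ℝ}

/-- The fibrewise supremum of `φ` along `π`. It is only meaningful on the range of `π`, as it takes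
the value `sSup ∅ = 0` elsewhere. -/
noncomputable def fiberSup (π : Z → T) (φ : Z → ℝ) (t : T) : ℝ :=
  sSup (φ '' (π ⁻¹' {t}))

lemma le_fiberSup (hφ : BddAbove (range φ)) (z : Z) : φ z ≤ fiberSup π φ (π z) :=
  le_csSup (hφ.mono (image_subset_range _ _)) (mem_image_of_mem φ rfl)

lemma fiberSup_le {z : Z} {c : ℝ} (h : ∀ w, π w = π z → φ w ≤ c) : fiberSup π φ (π z) ≤ c :=
  csSup_le ⟨φ z, mem_image_of_mem φ rfl⟩ (forall_mem_image.2 h)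

lemma uniformContinuousOn_fiberSup_of_lift [PseudoMetricSpace T] (hφ : BddAbove (range φ))
    (hlift : ∀ ε > 0, ∃ δ > 0, ∀ z w, dist (π z) (π w) < δ → ∃ z', π z' = π w ∧ φ z ≤ φ z' + ε) :
    UniformContinuousOn (fiberSup π φ) (range π) := by
  rw [Metric.uniformContinuousOn_iff_le]
  intro ε hε
  obtain ⟨δ, hδ, hlift⟩ := hlift ε hε
  have fiberSup_le_add : ∀ z w, dist (π z) (π w) < δ →
      fiberSup π φ (π z) ≤ fiberSup π φ (π w) + ε := by
    intro z w hzw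
    refine fiberSup_le fun y hy => ?_
    obtain ⟨y', hy', hle⟩ := hlift y w (hy ▸ hzw)
    calc φ y ≤ φ y' + ε := hle
      _ ≤ fiberSup π φ (π w) + ε := by gcongr; exact hy' ▸ le_fiberSup hφ y'
  refine ⟨δ / 2, half_pos hδ, ?_⟩
  rintro _ ⟨z, rfl⟩ _ ⟨w, rfl⟩ hzw
  have hlt : dist (π z) (π w) < δ := hzw.trans_lt (half_lt_self hδ)
  rw [Real.dist_eq, abs_sub_le_iff, sub_le_iff_le_add', sub_le_iff_le_add']
  exact ⟨fiberSup_le_add z w hlt, fiberSup_le_add w z (dist_comm (π z) (π w) ▸ hlt)⟩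

end FiberSup

section UniformlyOpen

variable {Z T : Type*} [PseudoMetricSpace Z] [PseudoMetricSpace T] {π : Z → T}

/-- A map is uniformly open (onto its range) if points of the range close to `π z` have preimages
close to `z`, uniformly in `z`. -/
def UniformlyOpen (π : Z → T) : Prop :=
  ∀ ε > 0, ∃ δ > 0, ∀ z w, dist (π z) (π w) < δ → ∃ z', π z' = π w ∧ dist z z' < ε

lemma UniformlyOpen.of_dist_le (h : ∀ z w, ∃ z', π z' = π w ∧ dist z z' ≤ dist (π z) (π w)) :
    UniformlyOpen π := fun ε hε =>
  ⟨ε, hε, fun z w hzw => (h z w).imp fun _ hz' => ⟨hz'.1, hz'.2.trans_lt hzw⟩⟩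

lemma UniformlyOpen.uniformContinuousOn_fiberSup (hπ : UniformlyOpen π) {φ : Z → ℝ}
    (hφ : UniformContinuous φ) (hbdd : BddAbove (range φ)) :
    UniformContinuousOn (fiberSup π φ) (range π) := by
  refine uniformContinuousOn_fiberSup_of_lift hbdd fun ε hε => ?_
  obtain ⟨η, hη, hφη⟩ := Metric.uniformContinuous_iff.1 hφ ε hε
  obtain ⟨δ, hδ, hlift⟩ := hπ η hη
  refine ⟨δ, hδ, fun z w hzw => ?_⟩
  obtain ⟨z', hz', hdist⟩ := hlift z w hzw
  exact ⟨z', hz', by linarith [(abs_lt.1 (hφη hdist)).2]⟩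

end UniformlyOpen

section Potential

variable {X S T : Type*} {f : X → ℝ} {u : X → S} {v : X → T} {E M : ℝ} {q : T → ℝ}

/-- The constraints that `g` has to satisfy in order to be the second summand of an approximation
`k ∘ u + g ∘ v` of `f` with uniform error at most `E`; the summand `k` is eliminated. -/
def IsPotential (f : X → ℝ) (u : X → S) (v : X → T) (E : ℝ) (g : T → ℝ) : Prop :=
  ∀ x y, u x = u y → g (v y) - g (v x) ≤ f y - f x + 2 * E

/-- The pairs of `v`-coordinates of two points on a common fibre of `u`. -/
def pairMap (u : X → S) (v : X → T) (p : u.PullbackSelf) : T × T :=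
  (v p.fst, v p.snd)

lemma IsPotential.of_abs_sub_le {k : S → ℝ} (h : ∀ x, |f x - (k (u x) + q (v x))| ≤ E) :
    IsPotential f u v E q := by
  intro x y hxy
  have hx := (abs_le.1 (h x)).2
  have hy := (abs_le.1 (h y)).1
  rw [hxy] at hx
  linarith

lemma IsPotential.abs_sub_fiberSup_le (hq : IsPotential f u v E q)
    (hbdd : BddAbove (range fun x => f x - q (v x))) (x : X) :
    |f x - (fiberSup u (fun x => f x - q (v x)) (u x) - E + q (v x))| ≤ E := by
  have hlower : f x - q (v x) ≤ fiberSup u (fun x => f x - q (v x)) (u x) := le_fiberSup hbdd x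
  have hupper : fiberSup u (fun x => f x - q (v x)) (u x) ≤ f x - q (v x) + 2 * E :=
    fiberSup_le fun y hy => by linarith [hq y x hy]
  rw [abs_le]
  constructor <;> linarith

section Boundedness

variable (hM : ∀ x, |f x| ≤ M) (hpair : ∀ x y, ∃ p, pairMap u v p = (v x, v y))
include hM hpair

lemma IsPotential.sub_le (hq : IsPotential f u v E q) (x y : X) :
    q (v y) - q (v x) ≤ 2 * M + 2 * E := by
  obtain ⟨p, hp⟩ := hpair x y
  obtain ⟨hx, hy⟩ : v p.fst = v x ∧ v p.snd = v y := Prod.mk_inj.1 hp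
  have hconstraint := hq p.fst p.snd p.property
  rw [hx, hy] at hconstraint
  linarith [(abs_le.1 (hM p.fst)).1, (abs_le.1 (hM p.snd)).2]

lemma IsPotential.exists_bounded [Nonempty X] (hq : IsPotential f u v E q) :
    ∃ q', IsPotential f u v E q' ∧ ∀ t, q' t ∈ Icc (-(2 * M + 2 * E)) (2 * M + 2 * E) := by
  obtain ⟨x₀⟩ := ‹Nonempty X›
  refine ⟨(range v).indicator fun t => q t - q (v x₀), fun x y hxy => ?_, fun t => ?_⟩
  · simpa only [indicator_of_mem (mem_range_self _), sub_sub_sub_cancel_right] using hq x y hxy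
  by_cases ht : t ∈ range v
  · obtain ⟨x, rfl⟩ := ht
    rw [indicator_of_mem (mem_range_self x)]
    constructor <;> linarith [hq.sub_le hM hpair x₀ x, hq.sub_le hM hpair x x₀]
  · rw [indicator_of_notMem ht]
    constructor <;> linarith [hq.sub_le hM hpair x₀ x₀]

lemma exists_isPotential_of_forall_pos (h : ∀ ε > 0, ∃ q, IsPotential f u v (E + ε) q) :
    ∃ q, IsPotential f u v E q := by
  rcases isEmpty_or_nonempty X with hX | hX
  · exact ⟨0, fun x => hX.elim x⟩
  let B : ℝ := 2 * M + 2 * (E + 1)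
  let K : ℕ → Set (T → ℝ) := fun n =>
    {q | ∀ t, q t ∈ Icc (-B) B} ∩ {q | IsPotential f u v (E + 1 / ((n : ℝ) + 1)) q}
  have hK_anti : ∀ n, K (n + 1) ⊆ K n := by
    refine fun n q hq => ⟨hq.1, fun x y hxy => (hq.2 x y hxy).trans ?_⟩
    gcongr
    simp
  have hK_nonempty : ∀ n, (K n).Nonempty := by
    intro n
    obtain ⟨q, hq⟩ := h (1 / ((n : ℝ) + 1)) Nat.one_div_pos_of_nat
    obtain ⟨q', hq', hbound⟩ := hq.exists_bounded hM hpair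
    have hn : 1 / ((n : ℝ) + 1) ≤ 1 := div_le_one_of_le₀ (by simp) (by positivity)
    exact ⟨q', fun t => Icc_subset_Icc (by linarith) (by linarith) (hbound t), hq'⟩
  have hbox_compact : IsCompact {q : T → ℝ | ∀ t, q t ∈ Icc (-B) B} :=
    isCompact_pi_infinite fun _ => isCompact_Icc
  have hpotential_closed : ∀ e, IsClosed {q | IsPotential f u v e q} := by
    intro e
    simp only [IsPotential, ofPred_forall]
    exact isClosed_iInter fun x => isClosed_iInter fun y => isClosed_iInter fun _ =>
      isClosed_le (by fun_prop) continuous_const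
  have hK_compact : ∀ n, IsCompact (K n) := fun n =>
    hbox_compact.inter_right (hpotential_closed _)
  obtain ⟨q, hq⟩ := IsCompact.nonempty_iInter_of_sequence_nonempty_isCompact_isClosed K hK_anti
    hK_nonempty (hK_compact 0) fun n => (hK_compact n).isClosed
  have hlim : Tendsto (fun n : ℕ => E + 1 / ((n : ℝ) + 1)) atTop (𝓝 E) := by
    simpa using tendsto_one_div_add_atTop_nhds_zero_nat.const_add E
  exact ⟨q, fun x y hxy => ge_of_tendsto' ((hlim.const_mul 2).const_add _) fun n =>
    (mem_iInter.1 hq n).2 x y hxy⟩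

end Boundedness

/-- The lower bound at `v p.fst` which the constraint of `IsPotential` for the pair `p` imposes on a
function with value `q (v p.snd)` at `v p.snd`. -/
def pairLowerBound (f : X → ℝ) (u : X → S) (v : X → T) (E : ℝ) (q : T → ℝ)
    (p : u.PullbackSelf) : ℝ :=
  q (v p.snd) - (f p.snd - f p.fst + 2 * E)

/-- The regularization of a potential `q`: at each point, the best lower bound that the constraints
and the values of `q` impose. -/
noncomputable def regularizedPotential (f : X → ℝ) (u : X → S) (v : X → T) (E : ℝ) (q : T → ℝ) :
    T → ℝ :=
  fiberSup (fun p : u.PullbackSelf => v p.fst) (pairLowerBound f u v E q)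

lemma IsPotential.bddAbove_pairLowerBound (hq : IsPotential f u v E q) (hM : ∀ x, |f x| ≤ M)
    (hpair : ∀ x y, ∃ p, pairMap u v p = (v x, v y)) :
    BddAbove (range (pairLowerBound f u v E q)) := by
  rcases isEmpty_or_nonempty X with hX | ⟨⟨x₀⟩⟩
  · exact ⟨0, forall_mem_range.2 fun p => hX.elim p.fst⟩
  refine ⟨q (v x₀) + 4 * M, forall_mem_range.2 fun p => ?_⟩
  have hsnd := hq.sub_le hM hpair x₀ p.snd
  have hf_fst := (abs_le.1 (hM p.fst)).2
  have hf_snd := (abs_le.1 (hM p.snd)).1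
  rw [pairLowerBound]
  linarith

lemma IsPotential.regularizedPotential_le (hq : IsPotential f u v E q) (x : X) :
    regularizedPotential f u v E q (v x) ≤ q (v x) := by
  refine fiberSup_le (π := fun p : u.PullbackSelf => v p.fst) (z := ⟨(x, x), rfl⟩) fun p hp => ?_
  have hconstraint := hq p.fst p.snd p.property
  rw [show v p.fst = v x from hp] at hconstraint
  rw [pairLowerBound]
  linarith

lemma IsPotential.regularize (hq : IsPotential f u v E q)
    (hbdd : BddAbove (range (pairLowerBound f u v E q))) :
    IsPotential f u v E (regularizedPotential f u v E q) := by
  intro x y hxy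
  have hx : q (v y) - (f y - f x + 2 * E) ≤ regularizedPotential f u v E q (v x) :=
    le_fiberSup (π := fun p : u.PullbackSelf => v p.fst) hbdd ⟨(x, y), hxy⟩
  linarith [hq.regularizedPotential_le y]

end Potential

section Approximation

variable {X S T : Type*} [PseudoMetricSpace X] [PseudoMetricSpace T]
  {f : X → ℝ} {u : X → S} {v : X → T} {E : ℝ} {q : T → ℝ}

-- A pair can be lifted with its second coordinate fixed, so `q`, which may be discontinuous,
-- contributes nothing to the oscillation.
lemma uniformContinuousOn_regularizedPotential (hf : UniformContinuous f)
    (hopen : UniformlyOpen (pairMap u v)) (hpair : ∀ x y, ∃ p, pairMap u v p = (v x, v y))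
    (hbdd : BddAbove (range (pairLowerBound f u v E q))) :
    UniformContinuousOn (regularizedPotential f u v E q) (range v) := by
  have hrange : range (fun p : u.PullbackSelf => v p.fst) = range v :=
    Subset.antisymm (range_subset_iff.2 fun p => mem_range_self p.fst)
      (range_subset_iff.2 fun x => ⟨⟨(x, x), rfl⟩, rfl⟩)
  rw [← hrange]
  refine uniformContinuousOn_fiberSup_of_lift hbdd fun ε hε => ?_
  obtain ⟨η, hη, hfη⟩ := Metric.uniformContinuous_iff.1 hf (ε / 2) (half_pos hε)
  obtain ⟨δ, hδ, hlift⟩ := hopen η hη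
  refine ⟨δ, hδ, fun p w hpw => ?_⟩
  obtain ⟨r, hr⟩ := hpair w.fst p.snd
  have hdist : dist (pairMap u v p) (pairMap u v r) < δ := by
    rw [hr, pairMap, Prod.dist_eq, dist_self]
    exact max_lt hpw hδ
  obtain ⟨p', hp', hpp'⟩ := hlift p r hdist
  obtain ⟨hfst, hsnd⟩ : v p'.fst = v w.fst ∧ v p'.snd = v p.snd := Prod.mk_inj.1 (hp'.trans hr)
  have hf_fst := (abs_lt.1 (hfη ((le_max_left _ _).trans_lt hpp' : dist p.fst p'.fst < η))).2
  have hf_snd := (abs_lt.1 (hfη ((le_max_right _ _).trans_lt hpp' : dist p.snd p'.snd < η))).1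
  refine ⟨p', hfst, ?_⟩
  rw [pairLowerBound, pairLowerBound, hsnd]
  linarith

theorem exists_continuous_approx_of_forall_pos [CompactSpace X] [PseudoMetricSpace S]
    (hu : Continuous u) (hv : Continuous v) (hf : Continuous f) (hu_open : UniformlyOpen u)
    (hpair_open : UniformlyOpen (pairMap u v))
    (hpair : ∀ x y, ∃ p, pairMap u v p = (v x, v y))
    (happrox : ∀ ε > 0, ∃ (k : S → ℝ) (g : T → ℝ), ∀ x, |f x - (k (u x) + g (v x))| ≤ E + ε) :
    ∃ (k : S → ℝ) (g : T → ℝ), Continuous (k ∘ u) ∧ Continuous (g ∘ v) ∧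
      ∀ x, |f x - (k (u x) + g (v x))| ≤ E := by
  obtain ⟨M, hM⟩ : ∃ M, ∀ x, |f x| ≤ M := by
    simpa using isCompact_univ.exists_bound_of_continuousOn hf.continuousOn
  obtain ⟨q, hq⟩ : ∃ q, IsPotential f u v E q := by
    refine exists_isPotential_of_forall_pos hM hpair fun ε hε => ?_
    obtain ⟨k, g, hkg⟩ := happrox ε hε
    exact ⟨g, .of_abs_sub_le hkg⟩
  have hlower_bdd := hq.bddAbove_pairLowerBound hM hpair
  let g := regularizedPotential f u v E q
  have hg_cont : Continuous (g ∘ v) :=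
    (uniformContinuousOn_regularizedPotential
      (CompactSpace.uniformContinuous_of_continuous hf) hpair_open hpair
      hlower_bdd).continuousOn.comp_continuous hv mem_range_self
  let residual : X → ℝ := fun x => f x - g (v x)
  have hres_cont : Continuous residual := hf.sub hg_cont
  have hres_bdd : BddAbove (range residual) := (isCompact_range hres_cont).bddAbove
  have hsup_cont : Continuous (fiberSup u residual ∘ u) :=
    (hu_open.uniformContinuousOn_fiberSup (CompactSpace.uniformContinuous_of_continuous hres_cont)
      hres_bdd).continuousOn.comp_continuous hu mem_range_self
  exact ⟨fun s => fiberSup u residual s - E, g, hsup_cont.sub continuous_const, hg_cont,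
    (hq.regularize hlower_bdd).abs_sub_fiberSup_le hres_bdd⟩

end Approximation

section RidgeFunctions

variable {n : ℕ} {X : Set (Fin n → ℝ)} {f g : (Fin n → ℝ) → ℝ}

lemma supDist_nonneg (X : Set (Fin n → ℝ)) (f g : (Fin n → ℝ) → ℝ) : 0 ≤ supDist X f g :=
  Real.sSup_nonneg (by rintro _ ⟨x, _, rfl⟩; exact abs_nonneg _)

lemma abs_sub_le_supDist (hX : IsCompact X) (hf : ContinuousOn f X) (hg : ContinuousOn g X)
    {x : Fin n → ℝ} (hx : x ∈ X) : |f x - g x| ≤ supDist X f g := by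
  obtain ⟨C, hC⟩ := hX.exists_bound_of_continuousOn (hf.sub hg)
  exact le_csSup ⟨C, by rintro _ ⟨y, hy, rfl⟩; exact hC y hy⟩ ⟨x, hx, rfl⟩

lemma supDist_le {E : ℝ} (hE : 0 ≤ E) (h : ∀ x ∈ X, |f x - g x| ≤ E) : supDist X f g ≤ E :=
  Real.sSup_le (by rintro _ ⟨x, hx, rfl⟩; exact h x hx) hE

lemma hasExtremalIn_of_forall_pos {A : Set ((Fin n → ℝ) → ℝ)} (hX : IsCompact X)
    (hf : ContinuousOn f X) (hA : ∀ g ∈ A, ContinuousOn g X) (hne : A.Nonempty)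
    (h : ∀ E, (∀ ε > 0, ∃ g ∈ A, ∀ x ∈ X, |f x - g x| ≤ E + ε) →
      ∃ g ∈ A, ∀ x ∈ X, |f x - g x| ≤ E) :
    HasExtremalIn X f A := by
  have hnonneg : ∀ r ∈ supDist X f '' A, 0 ≤ r :=
    forall_mem_image.2 fun g _ => supDist_nonneg X f g
  obtain ⟨g, hgA, hg⟩ := h (sInf (supDist X f '' A)) fun ε hε => by
    obtain ⟨_, ⟨g, hgA, rfl⟩, hlt⟩ :=
      exists_lt_of_csInf_lt (hne.image (supDist X f)) (lt_add_of_pos_right _ hε)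
    exact ⟨g, hgA, fun x hx => (abs_sub_le_supDist hX hf (hA g hgA) hx).trans hlt.le⟩
  exact ⟨g, hgA, (supDist_le (Real.sInf_nonneg hnonneg) hg).antisymm
    (csInf_le ⟨0, hnonneg⟩ (mem_image_of_mem _ hgA))⟩

lemma continuousOn_of_mem_RcSet {a₁ a₂ : Fin n → ℝ} (hg : g ∈ RcSet a₁ a₂ X) :
    ContinuousOn g X := by
  obtain ⟨g₁, g₂, hsum, hg₁, hg₂⟩ := hg
  exact (hg₁.add hg₂).congr hsum

/-- The coordinate `x ↦ a ⬝ᵥ x` as a function on the subtype `X`. -/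
def ridgeCoord (a : Fin n → ℝ) (X : Set (Fin n → ℝ)) (x : X) : ℝ :=
  a ⬝ᵥ (x : Fin n → ℝ)

lemma continuous_ridgeCoord (a : Fin n → ℝ) (X : Set (Fin n → ℝ)) :
    Continuous (ridgeCoord a X) :=
  continuous_const.dotProduct continuous_subtype_val

theorem hasExtremalIn_RcSet {a₁ a₂ : Fin n → ℝ} (hX : IsCompact X) (hf : ContinuousOn f X)
    (hopen : UniformlyOpen (ridgeCoord a₁ X))
    (hpair_open : UniformlyOpen (pairMap (ridgeCoord a₁ X) (ridgeCoord a₂ X)))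
    (hpair : ∀ x y, ∃ p, pairMap (ridgeCoord a₁ X) (ridgeCoord a₂ X) p =
      (ridgeCoord a₂ X x, ridgeCoord a₂ X y)) :
    HasExtremalIn X f (RcSet a₁ a₂ X) := by
  have := isCompact_iff_compactSpace.1 hX
  have hzero : (0 : (Fin n → ℝ) → ℝ) ∈ RcSet a₁ a₂ X :=
    ⟨0, 0, by simp, continuousOn_const, continuousOn_const⟩
  refine hasExtremalIn_of_forall_pos hX hf (fun _ => continuousOn_of_mem_RcSet) ⟨0, hzero⟩
    fun E happrox => ?_
  obtain ⟨k, g, hk, hg, hkg⟩ := exists_continuous_approx_of_forall_pos (E := E)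
    (continuous_ridgeCoord a₁ X) (continuous_ridgeCoord a₂ X)
    (continuousOn_iff_continuous_domRestrict.1 hf) hopen hpair_open hpair fun ε hε => by
      obtain ⟨_, ⟨k, g, hsum, -, -⟩, hle⟩ := happrox ε hε
      exact ⟨k, g, fun x => hsum x x.2 ▸ hle x x.2⟩
  exact ⟨fun x => k (a₁ ⬝ᵥ x) + g (a₂ ⬝ᵥ x),
    ⟨k, g, fun _ _ => rfl, continuousOn_iff_continuous_domRestrict.2 hk,
      continuousOn_iff_continuous_domRestrict.2 hg⟩,
    fun x hx => hkg ⟨x, hx⟩⟩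

end RidgeFunctions

section UnitCube

/-- The point of `ℝ³` with `x₀ + x₁ = s`, `x₀ - x₁ = t` and `x₂ = z`. -/
noncomputable def diamondPoint (s t z : ℝ) : Fin 3 → ℝ :=
  ![(s + t) / 2, (s - t) / 2, z]

lemma diamondPoint_mem_Icc_iff {s t z : ℝ} :
    diamondPoint s t z ∈ Icc 0 1 ↔ |s - 1| + |t| ≤ 1 ∧ z ∈ Icc 0 1 := by
  have habs : |s - 1| + |t| ≤ 1 ↔
      (0 ≤ (s + t) / 2 ∧ 0 ≤ (s - t) / 2) ∧ (s + t) / 2 ≤ 1 ∧ (s - t) / 2 ≤ 1 := by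
    grind
  rw [habs]
  simp only [mem_Icc, Pi.le_def, Fin.forall_fin_succ, diamondPoint]
  simp only [Pi.zero_apply, Fin.isValue, cons_val_zero, Fin.succ_zero_eq_one, cons_val_one,
    Fin.succ_one_eq_two, cons_val, cons_val_succ, cons_val_fin_one, IsEmpty.forall_iff, and_true,
    Pi.one_apply]
  tauto

lemma exists_diamondPoint_eq (x : Icc (0 : Fin 3 → ℝ) 1) :
    ∃ (s t z : ℝ) (h : diamondPoint s t z ∈ Icc 0 1), ⟨diamondPoint s t z, h⟩ = x := by
  have heq : diamondPoint (x.1 0 + x.1 1) (x.1 0 - x.1 1) (x.1 2) = x := by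
    ext i
    fin_cases i <;> simp [diamondPoint]
  exact ⟨_, _, _, heq.symm ▸ x.2, Subtype.ext heq⟩

lemma dist_diamondPoint_le {s t s' t' z r : ℝ} (hs : |s - s'| ≤ r) (ht : |t - t'| ≤ r) :
    dist (diamondPoint s t z) (diamondPoint s' t' z) ≤ r := by
  have hr : 0 ≤ r := (abs_nonneg _).trans hs
  rw [abs_le] at hs ht
  rw [dist_pi_le_iff hr]
  intro i
  rw [Real.dist_eq, abs_le]
  constructor <;> fin_cases i <;> simp [diamondPoint] <;> linarith

lemma exists_abs_le_and_abs_sub_le {b r r' : ℝ} (hb : |b| ≤ r) (hr' : 0 ≤ r') :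
    ∃ b', |b'| ≤ r' ∧ |b - b'| ≤ |r - r'| := by
  refine ⟨max (-r') (min r' b), ?_, ?_⟩ <;> grind

lemma ridgeCoord_sum_diamondPoint {s t z : ℝ} (h : diamondPoint s t z ∈ Icc 0 1) :
    ridgeCoord ![1, 1, 0] (Icc 0 1) ⟨diamondPoint s t z, h⟩ = s := by
  simp only [ridgeCoord, dotProduct, diamondPoint, Fin.sum_univ_three, cons_val]
  ring

lemma ridgeCoord_diff_diamondPoint {s t z : ℝ} (h : diamondPoint s t z ∈ Icc 0 1) :
    ridgeCoord ![1, -1, 0] (Icc 0 1) ⟨diamondPoint s t z, h⟩ = t := by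
  simp only [ridgeCoord, dotProduct, diamondPoint, Fin.sum_univ_three, cons_val]
  ring

lemma exists_diamond_diff_near {s t s' : ℝ} (hst : |s - 1| + |t| ≤ 1) (hs' : |s' - 1| ≤ 1) :
    ∃ t', |s' - 1| + |t'| ≤ 1 ∧ |t - t'| ≤ |s - s'| := by
  obtain ⟨t', ht', htt'⟩ :=
    exists_abs_le_and_abs_sub_le (le_sub_iff_add_le'.2 hst) (sub_nonneg.2 hs')
  refine ⟨t', le_sub_iff_add_le'.1 ht', ?_⟩
  calc |t - t'| ≤ |1 - |s - 1| - (1 - |s' - 1|)| := htt'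
    _ = abs (|s - 1| - |s' - 1|) := by rw [sub_sub_sub_cancel_left, abs_sub_comm]
    _ ≤ |s - 1 - (s' - 1)| := abs_abs_sub_abs_le _ _
    _ = |s - s'| := by rw [sub_sub_sub_cancel_right]

lemma exists_diamond_sum_near {s t₁ t₂ t₁' t₂' : ℝ} (h₁ : |s - 1| + |t₁| ≤ 1)
    (h₂ : |s - 1| + |t₂| ≤ 1) (h₁' : |t₁'| ≤ 1) (h₂' : |t₂'| ≤ 1) :
    ∃ s', |s' - 1| + |t₁'| ≤ 1 ∧ |s' - 1| + |t₂'| ≤ 1 ∧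
      |s - s'| ≤ max |t₁ - t₁'| |t₂ - t₂'| := by
  let ρ := max |t₁| |t₂|
  let ρ' := max |t₁'| |t₂'|
  have hs : |s - 1| ≤ 1 - ρ := by
    rw [le_sub_comm]
    exact max_le (le_sub_iff_add_le'.2 h₁) (le_sub_iff_add_le'.2 h₂)
  obtain ⟨b, hb, hsb⟩ := exists_abs_le_and_abs_sub_le hs (sub_nonneg.2 (max_le h₁' h₂' : ρ' ≤ 1))
  refine ⟨b + 1, ?_, ?_, ?_⟩
  · rw [add_sub_cancel_right]
    linarith [le_max_left |t₁'| |t₂'|]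
  · rw [add_sub_cancel_right]
    linarith [le_max_right |t₁'| |t₂'|]
  calc |s - (b + 1)| = |s - 1 - b| := by ring_nf
    _ ≤ |1 - ρ - (1 - ρ')| := hsb
    _ = |ρ - ρ'| := by rw [sub_sub_sub_cancel_left, abs_sub_comm]
    _ ≤ max (abs (|t₁| - |t₁'|)) (abs (|t₂| - |t₂'|)) := abs_max_sub_max_le_max _ _ _ _
    _ ≤ max |t₁ - t₁'| |t₂ - t₂'| :=
      max_le_max (abs_abs_sub_abs_le _ _) (abs_abs_sub_abs_le _ _)

lemma uniformlyOpen_ridgeCoord_unitCube :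
    UniformlyOpen (ridgeCoord ![1, 1, 0] (Icc (0 : Fin 3 → ℝ) 1)) := by
  refine .of_dist_le fun x w => ?_
  obtain ⟨s, t, z, hx, rfl⟩ := exists_diamondPoint_eq x
  obtain ⟨s', t', z', hw, rfl⟩ := exists_diamondPoint_eq w
  obtain ⟨hst, hz⟩ := diamondPoint_mem_Icc_iff.1 hx
  have hst' := (diamondPoint_mem_Icc_iff.1 hw).1
  obtain ⟨τ, hτ, htτ⟩ := exists_diamond_diff_near hst
    ((le_add_of_nonneg_right (abs_nonneg t')).trans hst')
  refine ⟨⟨diamondPoint s' τ z, diamondPoint_mem_Icc_iff.2 ⟨hτ, hz⟩⟩, ?_⟩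
  simp only [ridgeCoord_sum_diamondPoint, true_and]
  exact dist_diamondPoint_le le_rfl htτ

lemma uniformlyOpen_pairMap_unitCube :
    UniformlyOpen (pairMap (ridgeCoord ![1, 1, 0] (Icc (0 : Fin 3 → ℝ) 1))
      (ridgeCoord ![1, -1, 0] (Icc 0 1))) := by
  refine .of_dist_le ?_
  rintro ⟨⟨x, y⟩, hxy⟩ ⟨⟨x', y'⟩, hxy'⟩
  obtain ⟨s, t₁, z₁, hx, rfl⟩ := exists_diamondPoint_eq x
  obtain ⟨_, t₂, z₂, hy, rfl⟩ := exists_diamondPoint_eq y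
  obtain ⟨s₁', t₁', _, hx', rfl⟩ := exists_diamondPoint_eq x'
  obtain ⟨s₂', t₂', _, hy', rfl⟩ := exists_diamondPoint_eq y'
  simp only [ridgeCoord_sum_diamondPoint] at hxy
  subst hxy
  obtain ⟨hst₁, hz₁⟩ := diamondPoint_mem_Icc_iff.1 hx
  obtain ⟨hst₂, hz₂⟩ := diamondPoint_mem_Icc_iff.1 hy
  have hst₁' := (diamondPoint_mem_Icc_iff.1 hx').1
  have hst₂' := (diamondPoint_mem_Icc_iff.1 hy').1
  obtain ⟨σ, hσ₁, hσ₂, hsσ⟩ := exists_diamond_sum_near hst₁ hst₂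
    ((le_add_of_nonneg_left (abs_nonneg (s₁' - 1))).trans hst₁')
    ((le_add_of_nonneg_left (abs_nonneg (s₂' - 1))).trans hst₂')
  refine ⟨⟨(⟨diamondPoint σ t₁' z₁, diamondPoint_mem_Icc_iff.2 ⟨hσ₁, hz₁⟩⟩,
    ⟨diamondPoint σ t₂' z₂, diamondPoint_mem_Icc_iff.2 ⟨hσ₂, hz₂⟩⟩), ?_⟩, ?_⟩
  · simp only [ridgeCoord_sum_diamondPoint]
  simp only [pairMap, Function.Pullback.fst, Function.Pullback.snd, ridgeCoord_diff_diamondPoint,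
    true_and]
  exact max_le (dist_diamondPoint_le hsσ (le_max_left _ _))
    (dist_diamondPoint_le hsσ (le_max_right _ _))

lemma exists_pairMap_unitCube_eq (x y : Icc (0 : Fin 3 → ℝ) 1) :
    ∃ p, pairMap (ridgeCoord ![1, 1, 0] (Icc 0 1)) (ridgeCoord ![1, -1, 0] (Icc 0 1)) p =
      (ridgeCoord ![1, -1, 0] (Icc 0 1) x, ridgeCoord ![1, -1, 0] (Icc 0 1) y) := by
  obtain ⟨s, t, z, hx, rfl⟩ := exists_diamondPoint_eq x
  obtain ⟨s', t', z', hy, rfl⟩ := exists_diamondPoint_eq y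
  have hmem : ∀ {s t z}, diamondPoint s t z ∈ Icc 0 1 → diamondPoint 1 t z ∈ Icc 0 1 := by
    intro s t z h
    obtain ⟨hst, hz⟩ := diamondPoint_mem_Icc_iff.1 h
    exact diamondPoint_mem_Icc_iff.2 ⟨by rw [sub_self, abs_zero]; linarith [abs_nonneg (s - 1)], hz⟩
  refine ⟨⟨(⟨_, hmem hx⟩, ⟨_, hmem hy⟩), ?_⟩, ?_⟩
  · simp only [ridgeCoord_sum_diamondPoint]
  · exact Prod.ext ((ridgeCoord_diff_diamondPoint _).trans (ridgeCoord_diff_diamondPoint _).symm)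
      ((ridgeCoord_diff_diamondPoint _).trans (ridgeCoord_diff_diamondPoint _).symm)

end UnitCube

/-- Example (b): for the unit cube `X = [0,1]³`, `a¹ = (1,1,0)`
and `a² = (1,−1,0)`, the space `R_c(X)` is proximinal in `C(X)`. -/
theorem proximinality_of_Rc_on_unit_cube
    (f : (Fin 3 → ℝ) → ℝ) (hf : ContinuousOn f (Set.Icc (0 : Fin 3 → ℝ) 1)) :
    HasExtremalIn (Set.Icc (0 : Fin 3 → ℝ) 1) f
      (RcSet ![(1 : ℝ), 1, 0] ![(1 : ℝ), -1, 0] (Set.Icc (0 : Fin 3 → ℝ) 1)) :=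
  hasExtremalIn_RcSet isCompact_Icc hf uniformlyOpen_ridgeCoord_unitCube
    uniformlyOpen_pairMap_unitCube exists_pairMap_unitCube_eq
end

section
/- Let X ⊂ ℝⁿ be compact, let a¹, a² be linearly independent directions, and suppose the lengths of all irreducible paths in X (with respect to a¹ and a²) are bounded by a positive integer n₀. Then for every f ∈ R_c¹, i.e. every continuous function f on X of the form f(x) = g(a¹·x), one has sup_{t∈X} var_{O(t)} f ≤ (n₀/2) · sup_{t∈X} var_{{x∈X : a²·x = a²·t}} f. -/
open Matrix Set Filter Topology

/-!
Join two points of `X` by an edge when they agree in direction `a1` or in direction `a2`. A shortest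
walk in this graph never takes two consecutive edges of the same kind, since they could be merged
into one; so it is a path, and it is irreducible because every path is a walk. Hence two points of
one orbit are joined by a path with at most `n0` points. Along a path `f` changes only across the
edges of the second kind, and among any two consecutive edges there is only one of these.
-/

section Walk

variable {V : Type*} {G : SimpleGraph V}

theorem exists_walk_length_eq_of_adj_succ {p : ℕ → V} {k : ℕ}
    (hp : ∀ i < k, G.Adj (p i) (p (i + 1))) : ∃ w : G.Walk (p 0) (p k), w.length = k := by
  induction k with
  | zero => exact ⟨.nil, rfl⟩
  | succ k ih =>
    obtain ⟨w, hw⟩ := ih fun i hi => hp i (by lia)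
    exact ⟨w.concat (hp k k.lt_succ_self), by rw [SimpleGraph.Walk.length_concat, hw]⟩

theorem dist_getVert_of_length_eq_dist {u v : V} {w : G.Walk u v} (hw : w.length = G.dist u v)
    {i j : ℕ} (hij : i ≤ j) (hj : j ≤ w.length) :
    G.dist (w.getVert i) (w.getVert j) = j - i := by
  have hsub : ((w.drop i).take (j - i)).IsSubwalk w :=
    ((w.drop i).isSubwalk_take _).trans (w.isSubwalk_drop _)
  have hdist := SimpleGraph.length_eq_dist_of_subwalk hw hsub
  rw [SimpleGraph.Walk.take_length, SimpleGraph.Walk.drop_length,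
    SimpleGraph.Walk.drop_getVert, Nat.add_sub_cancel' hij] at hdist
  lia

end Walk

theorem dist_le_half_mul_of_dist_add_two_le {α : Type*} [PseudoMetricSpace α] {u : ℕ → α}
    {C : ℝ} {m : ℕ} (hone : ∀ i, i + 1 < m → dist (u i) (u (i + 1)) ≤ C)
    (htwo : ∀ i, i + 2 < m → dist (u i) (u (i + 2)) ≤ C) :
    ∀ k < m, dist (u 0) (u k) ≤ ((k + 1) / 2 : ℕ) * C
  | 0, _ => by simp
  | 1, h => by simpa using hone 0 h
  | k + 2, h => by
    have ih := dist_le_half_mul_of_dist_add_two_le hone htwo k (by lia)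
    calc dist (u 0) (u (k + 2))
        ≤ dist (u 0) (u k) + dist (u k) (u (k + 2)) := dist_triangle _ _ _
      _ ≤ ((k + 1) / 2 : ℕ) * C + C := add_le_add ih (htwo k h)
      _ = ((k + 2 + 1) / 2 : ℕ) * C := by
        rw [show (k + 2 + 1) / 2 = (k + 1) / 2 + 1 by lia]
        push_cast
        ring

section Path

variable {n : ℕ} {a1 a2 : Fin n → ℝ} {X : Set (Fin n → ℝ)} {m : ℕ} {p : ℕ → Fin n → ℝ}

theorem IsPath.ne (hp : IsPath a1 a2 m p) {i : ℕ} (hi : i + 1 < m) : p i ≠ p (i + 1) := by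
  have hne : p (i + 1) - p i ≠ 0 := hp.elim (fun h => (h i hi).1) fun h => (h i hi).1
  exact (sub_ne_zero.mp hne).symm

theorem IsPathFrom.dotProduct_eq_of_even (hp : IsPathFrom a1 a2 m p) {i : ℕ} (hi : i + 1 < m)
    (heven : i % 2 = 0) : a1 ⬝ᵥ p i = a1 ⬝ᵥ p (i + 1) := by
  have h := (hp i hi).2.1 heven
  rw [dotProduct_sub, sub_eq_zero] at h
  exact h.symm

theorem IsPathFrom.dotProduct_eq_of_odd (hp : IsPathFrom a1 a2 m p) {i : ℕ} (hi : i + 1 < m)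
    (hodd : i % 2 = 1) : a2 ⬝ᵥ p i = a2 ⬝ᵥ p (i + 1) := by
  have h := (hp i hi).2.2 hodd
  rw [dotProduct_sub, sub_eq_zero] at h
  exact h.symm

theorem IsPath.dotProduct_eq_or (hp : IsPath a1 a2 m p) {i : ℕ} (hi : i + 1 < m) :
    a1 ⬝ᵥ p i = a1 ⬝ᵥ p (i + 1) ∨ a2 ⬝ᵥ p i = a2 ⬝ᵥ p (i + 1) := by
  rcases hp with hp | hp <;> rcases Nat.mod_two_eq_zero_or_one i with heven | hodd
  · exact .inl (hp.dotProduct_eq_of_even hi heven)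
  · exact .inr (hp.dotProduct_eq_of_odd hi hodd)
  · exact .inr (hp.dotProduct_eq_of_even hi heven)
  · exact .inl (hp.dotProduct_eq_of_odd hi hodd)

theorem IsPath.dotProduct_eq_and_succ_or (hp : IsPath a1 a2 m p) {i : ℕ} (hi : i + 2 < m) :
    (a1 ⬝ᵥ p i = a1 ⬝ᵥ p (i + 1) ∧ a2 ⬝ᵥ p (i + 1) = a2 ⬝ᵥ p (i + 2)) ∨
      (a2 ⬝ᵥ p i = a2 ⬝ᵥ p (i + 1) ∧ a1 ⬝ᵥ p (i + 1) = a1 ⬝ᵥ p (i + 2)) := by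
  rcases hp with hp | hp <;> rcases Nat.mod_two_eq_zero_or_one i with heven | hodd
  · exact .inl ⟨hp.dotProduct_eq_of_even (by lia) heven, hp.dotProduct_eq_of_odd hi (by lia)⟩
  · exact .inr ⟨hp.dotProduct_eq_of_odd (by lia) hodd, hp.dotProduct_eq_of_even hi (by lia)⟩
  · exact .inr ⟨hp.dotProduct_eq_of_even (by lia) heven, hp.dotProduct_eq_of_odd hi (by lia)⟩
  · exact .inl ⟨hp.dotProduct_eq_of_odd (by lia) hodd, hp.dotProduct_eq_of_even hi (by lia)⟩

theorem isPathFrom_of_dotProduct_eq_or (hne : ∀ i, i + 1 < m → p i ≠ p (i + 1))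
    (hstep : ∀ i, i + 1 < m → a1 ⬝ᵥ p i = a1 ⬝ᵥ p (i + 1) ∨ a2 ⬝ᵥ p i = a2 ⬝ᵥ p (i + 1))
    (h1 : ∀ i, i + 2 < m → a1 ⬝ᵥ p i = a1 ⬝ᵥ p (i + 1) →
      a1 ⬝ᵥ p (i + 1) ≠ a1 ⬝ᵥ p (i + 2))
    (h2 : ∀ i, i + 2 < m → a2 ⬝ᵥ p i = a2 ⬝ᵥ p (i + 1) →
      a2 ⬝ᵥ p (i + 1) ≠ a2 ⬝ᵥ p (i + 2))
    (hzero : 1 < m → a1 ⬝ᵥ p 0 = a1 ⬝ᵥ p 1) : IsPathFrom a1 a2 m p := by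
  have halt : ∀ i, i + 1 < m → (i % 2 = 0 → a1 ⬝ᵥ p i = a1 ⬝ᵥ p (i + 1)) ∧
      (i % 2 = 1 → a2 ⬝ᵥ p i = a2 ⬝ᵥ p (i + 1)) := by
    intro i
    induction i with
    | zero => exact fun hi => ⟨fun _ => hzero hi, fun hodd => by lia⟩
    | succ i ih =>
      intro hi
      obtain ⟨iheven, ihodd⟩ := ih (by lia)
      refine ⟨fun heven => (hstep _ hi).resolve_right fun h => ?_,
        fun hodd => (hstep _ hi).resolve_left fun h => ?_⟩
      · exact h2 i hi (ihodd (by lia)) h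
      · exact h1 i hi (iheven (by lia)) h
  intro i hi
  simp only [dotProduct_sub, sub_eq_zero, sub_ne_zero]
  exact ⟨(hne i hi).symm, fun h => ((halt i hi).1 h).symm, fun h => ((halt i hi).2 h).symm⟩

theorem isPath_of_dotProduct_eq_or (hne : ∀ i, i + 1 < m → p i ≠ p (i + 1))
    (hstep : ∀ i, i + 1 < m → a1 ⬝ᵥ p i = a1 ⬝ᵥ p (i + 1) ∨ a2 ⬝ᵥ p i = a2 ⬝ᵥ p (i + 1))
    (h1 : ∀ i, i + 2 < m → a1 ⬝ᵥ p i = a1 ⬝ᵥ p (i + 1) →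
      a1 ⬝ᵥ p (i + 1) ≠ a1 ⬝ᵥ p (i + 2))
    (h2 : ∀ i, i + 2 < m → a2 ⬝ᵥ p i = a2 ⬝ᵥ p (i + 1) →
      a2 ⬝ᵥ p (i + 1) ≠ a2 ⬝ᵥ p (i + 2)) :
    IsPath a1 a2 m p := by
  by_cases hzero : 1 < m → a1 ⬝ᵥ p 0 = a1 ⬝ᵥ p 1
  · exact .inl (isPathFrom_of_dotProduct_eq_or hne hstep h1 h2 hzero)
  · obtain ⟨hm, hzero⟩ := Classical.not_imp.mp hzero
    exact .inr (isPathFrom_of_dotProduct_eq_or hne (fun i hi => (hstep i hi).symm) h2 h1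
      fun _ => (hstep 0 hm).resolve_left hzero)

variable (a1 a2 X) in
/-- The graph joining two distinct points of `X` when their difference is perpendicular to `a1` or
to `a2`. Its shortest walks are irreducible paths. Points outside `X` are isolated vertices. -/
def stepGraph : SimpleGraph (Fin n → ℝ) where
  Adj x y := x ≠ y ∧ x ∈ X ∧ y ∈ X ∧ (a1 ⬝ᵥ x = a1 ⬝ᵥ y ∨ a2 ⬝ᵥ x = a2 ⬝ᵥ y)
  symm := ⟨fun _ _ ⟨hne, hx, hy, h⟩ => ⟨hne.symm, hy, hx, h.imp Eq.symm Eq.symm⟩⟩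
  loopless := ⟨fun _ h => h.1 rfl⟩

theorem IsPathIn.stepGraph_adj (hp : IsPathIn a1 a2 X m p) {i : ℕ} (hi : i + 1 < m) :
    (stepGraph a1 a2 X).Adj (p i) (p (i + 1)) :=
  ⟨hp.2.1.ne hi, hp.2.2 i (by lia), hp.2.2 _ hi, hp.2.1.dotProduct_eq_or hi⟩

theorem IsPathIn.exists_walk_length_eq (hp : IsPathIn a1 a2 X m p) {k : ℕ} (hk : k < m) :
    ∃ w : (stepGraph a1 a2 X).Walk (p 0) (p k), w.length = k :=
  exists_walk_length_eq_of_adj_succ fun _ hi => hp.stepGraph_adj (by lia)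

theorem stepGraph_reachable_of_mem_orbit {t y : Fin n → ℝ} (hy : y ∈ Orbit a1 a2 X t) :
    (stepGraph a1 a2 X).Reachable t y := by
  obtain ⟨m, p, hp, ⟨i, hi, rfl⟩, j, hj, rfl⟩ := hy
  obtain ⟨v, -⟩ := hp.exists_walk_length_eq hi
  obtain ⟨w, -⟩ := hp.exists_walk_length_eq hj
  exact v.reachable.symm.trans w.reachable

theorem stepGraph_getVert_mem {x y : Fin n → ℝ} (hy : y ∈ X) (w : (stepGraph a1 a2 X).Walk x y)
    (i : ℕ) : w.getVert i ∈ X := by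
  rcases lt_or_ge i w.length with hi | hi
  · exact (w.adj_getVert_succ hi).2.1
  · rwa [w.getVert_of_length_le hi]

theorem isPath_getVert_of_length_eq_dist {x y : Fin n → ℝ} (hy : y ∈ X)
    {w : (stepGraph a1 a2 X).Walk x y} (hw : w.length = (stepGraph a1 a2 X).dist x y) :
    IsPath a1 a2 (w.length + 1) w.getVert := by
  have hadj (i : ℕ) (hi : i + 1 < w.length + 1) := w.adj_getVert_succ (Nat.lt_of_succ_lt_succ hi)
  have hapart (i : ℕ) (hi : i + 2 < w.length + 1) :
      ¬(a1 ⬝ᵥ w.getVert i = a1 ⬝ᵥ w.getVert (i + 2) ∨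
        a2 ⬝ᵥ w.getVert i = a2 ⬝ᵥ w.getVert (i + 2)) := by
    intro h
    have hdist := dist_getVert_of_length_eq_dist hw (Nat.le_add_right i 2) (by lia)
    have hne : w.getVert i ≠ w.getVert (i + 2) := fun heq => by
      rw [heq, SimpleGraph.dist_self] at hdist
      lia
    have hone := SimpleGraph.dist_eq_one_iff_adj.mpr
      (show (stepGraph a1 a2 X).Adj _ _ from
        ⟨hne, stepGraph_getVert_mem hy w i, stepGraph_getVert_mem hy w (i + 2), h⟩)
    lia
  exact isPath_of_dotProduct_eq_or (fun i hi => (hadj i hi).1) (fun i hi => (hadj i hi).2.2.2)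
    (fun i hi h h' => hapart i hi (.inl (h.trans h')))
    fun i hi h h' => hapart i hi (.inr (h.trans h'))

theorem isIrreduciblePathIn_getVert_of_length_eq_dist {x y : Fin n → ℝ} (hy : y ∈ X)
    {w : (stepGraph a1 a2 X).Walk x y} (hw : w.length = (stepGraph a1 a2 X).dist x y) :
    IsIrreduciblePathIn a1 a2 X (w.length + 1) w.getVert := by
  refine ⟨⟨Nat.le_add_left 1 _, isPath_getVert_of_length_eq_dist hy hw,
    fun i _ => stepGraph_getVert_mem hy w i⟩, ?_⟩
  rintro ⟨l, q, hl, hq, hq0, hql⟩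
  obtain ⟨v, hv⟩ := hq.exists_walk_length_eq (Nat.sub_lt hq.1 Nat.one_pos)
  have hdist := SimpleGraph.dist_le v
  rw [hv, hq0, hql, Nat.add_sub_cancel, w.getVert_zero, w.getVert_length, ← hw] at hdist
  have := hq.1
  lia

theorem exists_isIrreduciblePathIn_of_mem_orbit {t x y : Fin n → ℝ} (hx : x ∈ Orbit a1 a2 X t)
    (hy : y ∈ Orbit a1 a2 X t) :
    ∃ m p, IsIrreduciblePathIn a1 a2 X m p ∧ p 0 = x ∧ p (m - 1) = y := by
  have hyX : y ∈ X := by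
    obtain ⟨m, p, hp, -, j, hj, rfl⟩ := hy
    exact hp.2.2 j hj
  obtain ⟨w, hw⟩ := ((stepGraph_reachable_of_mem_orbit hx).symm.trans
    (stepGraph_reachable_of_mem_orbit hy)).exists_walk_length_eq_dist
  exact ⟨_, _, isIrreduciblePathIn_getVert_of_length_eq_dist hyX hw, w.getVert_zero,
    w.getVert_length⟩

variable {f : (Fin n → ℝ) → ℝ} {V : ℝ}

theorem IsPathIn.abs_sub_le (hp : IsPathIn a1 a2 X m p)
    (h1 : ∀ x ∈ X, ∀ y ∈ X, a1 ⬝ᵥ x = a1 ⬝ᵥ y → f x = f y)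
    (h2 : ∀ x ∈ X, ∀ y ∈ X, a2 ⬝ᵥ x = a2 ⬝ᵥ y → |f x - f y| ≤ V) :
    |f (p 0) - f (p (m - 1))| ≤ (m / 2 : ℕ) * V := by
  obtain ⟨hm, hpath, hpX⟩ := hp
  have hV : 0 ≤ V := (abs_nonneg _).trans (h2 _ (hpX 0 hm) _ (hpX 0 hm) rfl)
  have hone (i : ℕ) (hi : i + 1 < m) : |f (p i) - f (p (i + 1))| ≤ V := by
    have hpi := hpX i (by lia)
    rcases hpath.dotProduct_eq_or hi with h | h
    · rwa [h1 _ hpi _ (hpX _ hi) h, sub_self, abs_zero]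
    · exact h2 _ hpi _ (hpX _ hi) h
  have htwo (i : ℕ) (hi : i + 2 < m) : |f (p i) - f (p (i + 2))| ≤ V := by
    have hpi := hpX i (by lia)
    have hpi1 := hpX (i + 1) (by lia)
    rcases hpath.dotProduct_eq_and_succ_or hi with ⟨hfst, hsnd⟩ | ⟨hfst, hsnd⟩
    · rw [h1 _ hpi _ hpi1 hfst]
      exact h2 _ hpi1 _ (hpX _ hi) hsnd
    · rw [← h1 _ hpi1 _ (hpX _ hi) hsnd]
      exact h2 _ hpi _ hpi1 hfst
  have hlast := dist_le_half_mul_of_dist_add_two_le (u := fun i => f (p i)) hone htwo (m - 1)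
    (Nat.sub_lt hm Nat.one_pos)
  rwa [Nat.sub_add_cancel hm] at hlast

theorem abs_sub_le_of_mem_orbit {n0 : ℕ} (hbound : ∀ m p, IsIrreduciblePathIn a1 a2 X m p → m ≤ n0)
    (h1 : ∀ x ∈ X, ∀ y ∈ X, a1 ⬝ᵥ x = a1 ⬝ᵥ y → f x = f y)
    (h2 : ∀ x ∈ X, ∀ y ∈ X, a2 ⬝ᵥ x = a2 ⬝ᵥ y → |f x - f y| ≤ V)
    {t x y : Fin n → ℝ} (hx : x ∈ Orbit a1 a2 X t) (hy : y ∈ Orbit a1 a2 X t) :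
    |f x - f y| ≤ (n0 / 2 : ℕ) * V := by
  obtain ⟨m, p, hp, rfl, rfl⟩ := exists_isIrreduciblePathIn_of_mem_orbit hx hy
  have hm : m ≤ n0 := hbound m p hp
  have hp0 : p 0 ∈ X := hp.1.2.2 0 hp.1.1
  have hV : 0 ≤ V := (abs_nonneg _).trans (h2 _ hp0 _ hp0 rfl)
  calc |f (p 0) - f (p (m - 1))| ≤ (m / 2 : ℕ) * V := hp.1.abs_sub_le h1 h2
    _ ≤ (n0 / 2 : ℕ) * V := by gcongr

end Path

section Variation

variable {n : ℕ} {f : (Fin n → ℝ) → ℝ} {X Y Z : Set (Fin n → ℝ)}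

theorem varOn_nonneg : 0 ≤ varOn f Y :=
  Real.sSup_nonneg (by rintro _ ⟨x, -, y, -, rfl⟩; exact abs_nonneg _)

theorem varOn_le {c : ℝ} (hc : 0 ≤ c) (h : ∀ x ∈ Y, ∀ y ∈ Y, |f x - f y| ≤ c) :
    varOn f Y ≤ c :=
  Real.sSup_le (by rintro _ ⟨x, hx, y, hy, rfl⟩; exact h x hx y hy) hc

theorem BddOn.abs_sub_le_varOn (hf : BddOn f Y) {x y : Fin n → ℝ} (hx : x ∈ Y) (hy : y ∈ Y) :
    |f x - f y| ≤ varOn f Y := by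
  obtain ⟨M, hM⟩ := hf
  refine le_csSup ⟨M + M, ?_⟩ ⟨x, hx, y, hy, rfl⟩
  rintro _ ⟨u, hu, v, hv, rfl⟩
  exact (abs_sub _ _).trans (add_le_add (hM u hu) (hM v hv))

theorem BddOn.mono (hf : BddOn f Z) (hYZ : Y ⊆ Z) : BddOn f Y :=
  hf.imp fun _ hM x hx => hM x (hYZ hx)

theorem BddOn.varOn_mono (hf : BddOn f Z) (hYZ : Y ⊆ Z) : varOn f Y ≤ varOn f Z :=
  varOn_le varOn_nonneg fun _ hx _ hy => hf.abs_sub_le_varOn (hYZ hx) (hYZ hy)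

theorem BddOn.varOn_le_sSup_varOn (hf : BddOn f X) {F : (Fin n → ℝ) → Set (Fin n → ℝ)}
    (hF : ∀ t ∈ X, F t ⊆ X) {t : Fin n → ℝ} (ht : t ∈ X) :
    varOn f (F t) ≤ sSup {r | ∃ t ∈ X, r = varOn f (F t)} := by
  refine le_csSup ⟨varOn f X, ?_⟩ ⟨t, ht, rfl⟩
  rintro _ ⟨s, hs, rfl⟩
  exact hf.varOn_mono (hF s hs)

theorem sSup_varOn_nonneg {F : (Fin n → ℝ) → Set (Fin n → ℝ)} :
    0 ≤ sSup {r | ∃ t ∈ X, r = varOn f (F t)} :=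
  Real.sSup_nonneg (by rintro _ ⟨t, -, rfl⟩; exact varOn_nonneg)

theorem sSup_varOn_le {F : (Fin n → ℝ) → Set (Fin n → ℝ)} {c : ℝ} (hc : 0 ≤ c)
    (h : ∀ t ∈ X, ∀ x ∈ F t, ∀ y ∈ F t, |f x - f y| ≤ c) :
    sSup {r | ∃ t ∈ X, r = varOn f (F t)} ≤ c :=
  Real.sSup_le (by rintro _ ⟨t, ht, rfl⟩; exact varOn_le hc (h t ht)) hc

theorem BddOn.abs_sub_le_sSup_varOn_fiber (hf : BddOn f X) {a x y : Fin n → ℝ}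
    (hx : x ∈ X) (hy : y ∈ X) (h : a ⬝ᵥ x = a ⬝ᵥ y) :
    |f x - f y| ≤ sSup {r | ∃ t ∈ X, r = varOn f {x ∈ X | a ⬝ᵥ x = a ⬝ᵥ t}} :=
  calc |f x - f y| ≤ varOn f {z ∈ X | a ⬝ᵥ z = a ⬝ᵥ x} :=
        (hf.mono fun _ hz => hz.1).abs_sub_le_varOn ⟨hx, rfl⟩ ⟨hy, h.symm⟩
    _ ≤ _ := hf.varOn_le_sSup_varOn (F := fun t => {z ∈ X | a ⬝ᵥ z = a ⬝ᵥ t})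
        (fun _ _ _ hz => hz.1) hx

end Variation

theorem orbit_variation_bound_of_bounded_paths_general
    {n : ℕ} (a1 a2 : Fin n → ℝ) (X : Set (Fin n → ℝ)) (n0 : ℕ)
    (hbound : ∀ m p, IsIrreduciblePathIn a1 a2 X m p → m ≤ n0)
    (g : ℝ → ℝ) (f : (Fin n → ℝ) → ℝ)
    (hfg : ∀ x ∈ X, f x = g (a1 ⬝ᵥ x)) (hf : BddOn f X) :
    sSup {r | ∃ t ∈ X, r = varOn f (Orbit a1 a2 X t)} ≤
      ((n0 / 2 : ℕ) : ℝ) *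
        sSup {r | ∃ t ∈ X, r = varOn f {x ∈ X | a2 ⬝ᵥ x = a2 ⬝ᵥ t}} := by
  have h1 (x) (hx : x ∈ X) (y) (hy : y ∈ X) (h : a1 ⬝ᵥ x = a1 ⬝ᵥ y) : f x = f y := by
    rw [hfg x hx, hfg y hy, h]
  refine sSup_varOn_le (mul_nonneg (Nat.cast_nonneg _) sSup_varOn_nonneg) fun t _ x hx y hy => ?_
  exact abs_sub_le_of_mem_orbit hbound h1
    (fun _ hu _ hv h => hf.abs_sub_le_sSup_varOn_fiber hu hv h) hx hy

/-- if the lengths of all irreducible paths in `X` are bounded by a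
positive integer `n₀`, then every continuous function `f` on `X` of the form
`f(x) = g(a¹·x)` satisfies
`sup_{t∈X} var_{O(t)} f ≤ (n₀/2) · sup_{t∈X} var_{π₂⁻¹(π₂(t))} f`. -/
theorem orbit_variation_bound_of_bounded_paths
    {n : ℕ} (a1 a2 : Fin n → ℝ) (hindep : LinearIndependent ℝ ![a1, a2])
    (X : Set (Fin n → ℝ)) (hX : IsCompact X)
    (n0 : ℕ) (hn0 : 0 < n0)
    (hbound : ∀ m p, IsIrreduciblePathIn a1 a2 X m p → m ≤ n0)
    (g : ℝ → ℝ) (f : (Fin n → ℝ) → ℝ)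
    (hfg : ∀ x ∈ X, f x = g (a1 ⬝ᵥ x)) (hf : ContinuousOn f X) :
    sSup {r | ∃ t ∈ X, r = varOn f (Orbit a1 a2 X t)} ≤
      ((n0 : ℝ) / 2) * sSup {r | ∃ t ∈ X, r = varOn f {x ∈ X | a2 ⬝ᵥ x = a2 ⬝ᵥ t}} := by
  exact (orbit_variation_bound_of_bounded_paths_general a1 a2 X n0 hbound g f hfg
    (hX.exists_bound_of_continuousOn hf)).trans
    (mul_le_mul_of_nonneg_right Nat.cast_div_le sSup_varOn_nonneg)
end
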